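/- arXiv:1502.03065 — 2 statements merged into one kernel-verified Lean document; each statement's English description precedes it below -/
import Mathlib

section
/- Let A be a finite alphabet, let P be the element of the incidence algebra I(A*) over ℚ defined by P(u,v) = binom(v,u), and for a nonzero rational number d let D_d be defined by D_d(u,v) = d^{|u|} · δ(u,v). Then for every positive natural number d, P^d = D_{1/d} · P · D_d in I(A*); in particular, with D_{−1}(u,v) = (−1)^{|u|} δ(u,v), the inverse of P equals D_{−1} · P · D_{−1}. -/
/-- `subwordCount v u` is the number of occurrences of `u` as a (scattered) subword of `v`,
i.e. the number of strictly increasing maps `φ` from the positions of `u` to the positions of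
`v` matching the letters. -/
def subwordCount {A : Type*} [DecidableEq A] (v u : List A) : ℕ :=
  ((Finset.univ : Finset (Fin u.length → Fin v.length)).filter
    (fun φ => (∀ i j : Fin u.length, i < j → φ i < φ j) ∧
      ∀ i : Fin u.length, u.get i = v.get (φ i))).card

/-- The identity `δ` of the incidence algebra `I(A*)` over `ℚ`. -/
def deltaW {A : Type*} [DecidableEq A] (u v : List A) : ℚ := if u = v then 1 else 0

/-- Convolution in the incidence algebra `I(A*)` of words under the subword order:
`(FG)(u,v) = ∑_{u ≤ z ≤ v} F(u,z)·G(z,v)`.  The words `z` with `u ≤ z ≤ v` are exactly the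
sublists `z` of `v` with `subwordCount z u > 0`. -/
def convW {A : Type*} [DecidableEq A] (F G : List A → List A → ℚ) (u v : List A) : ℚ :=
  ∑ z ∈ v.sublists.toFinset.filter (fun z => 0 < subwordCount z u), F u z * G z v

/-- Convolution powers, with `F ^ 0 = δ`. -/
def convPowW {A : Type*} [DecidableEq A] (F : List A → List A → ℚ) :
    ℕ → List A → List A → ℚ
  | 0 => deltaW
  | ℓ + 1 => convW F (convPowW F ℓ)

/-- The element `H` of `I(A*)`: `H(u,v) = binom(v,u)` if `|v| = |u| + 1`, else `0`. -/
def HW {A : Type*} [DecidableEq A] (u v : List A) : ℚ :=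
  if v.length = u.length + 1 then (subwordCount v u : ℚ) else 0

/-- The element `P` of `I(A*)`: `P(u,v) = binom(v,u)`. -/
def PW {A : Type*} [DecidableEq A] (u v : List A) : ℚ := subwordCount v u

/-- The diagonal element `D_q` of `I(A*)`: `D_q(u,v) = q^{|u|} · δ(u,v)`. -/
def DW {A : Type*} [DecidableEq A] (q : ℚ) (u v : List A) : ℚ := q ^ u.length * deltaW u v

/-!
The elements `P_q(u,v) = q^{|v|-|u|} · binom(v,u)` satisfy `P_p · P_q = P_{p+q}`: in
`∑_z P_p(u,z) P_q(z,v)` each letter of `v` outside a given occurrence of `u` is deleted either in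
passing from `v` to `z` (weight `q`) or in passing from `z` to `u` (weight `p`). Since `P_0 = δ` and
`P_1 = P`, this gives `P^d = P_d` and `P⁻¹ = P_{-1}`, while `D_{1/q} · P · D_q` has entries
`q^{-|u|} · binom(v,u) · q^{|v|}` and is therefore `P_q`.
-/

section Occurrences

variable {A : Type*}

/-- The map `φ` from positions of `u` to positions of `v` is an occurrence of `u` as a subword
of `v`. -/
def IsOccurrence (u v : List A) (φ : Fin u.length → Fin v.length) : Prop :=
  StrictMono φ ∧ ∀ i, u.get i = v.get (φ i)

theorem subwordCount_eq_ncard [DecidableEq A] (v u : List A) :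
    subwordCount v u = {φ | IsOccurrence u v φ}.ncard := by
  rw [subwordCount, ← Set.ncard_coe_finset, Finset.coe_filter_univ]
  rfl

theorem isOccurrence_succ_comp_iff {u v : List A} {x : A} {φ : Fin u.length → Fin v.length} :
    IsOccurrence u (x :: v) (Fin.succ ∘ φ) ↔ IsOccurrence u v φ :=
  and_congr_left' ⟨fun h _ _ hij => Fin.succ_lt_succ_iff.1 (h hij),
    fun h => Fin.strictMono_succ.comp h⟩

theorem strictMono_cons_zero_succ_comp_iff {k n : ℕ} {φ : Fin k → Fin n} :
    StrictMono (Fin.cons 0 (Fin.succ ∘ φ) : Fin (k + 1) → Fin (n + 1)) ↔ StrictMono φ := by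
  simp [StrictMono, Fin.forall_fin_succ]

theorem isOccurrence_cons_zero_succ_comp_iff {u v : List A} {a x : A}
    {φ : Fin u.length → Fin v.length} :
    IsOccurrence (a :: u) (x :: v)
      (Fin.cons 0 (Fin.succ ∘ φ) : Fin (u.length + 1) → Fin (v.length + 1)) ↔
      a = x ∧ IsOccurrence u v φ := by
  have letters_match_iff : (∀ i : Fin (u.length + 1), (a :: u).get i = (x :: v).get
      ((Fin.cons 0 (Fin.succ ∘ φ) : Fin (u.length + 1) → Fin (v.length + 1)) i)) ↔
      a = x ∧ ∀ i, u.get i = v.get (φ i) := by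
    simp [Fin.forall_fin_succ]
  exact (and_congr strictMono_cons_zero_succ_comp_iff letters_match_iff).trans and_left_comm

theorem exists_eq_succ_comp {ι : Type*} {n : ℕ} {φ : ι → Fin (n + 1)} (h : ∀ i, φ i ≠ 0) :
    ∃ ψ : ι → Fin n, φ = Fin.succ ∘ ψ := by
  choose ψ hψ using fun i => Fin.exists_succ_eq.2 (h i)
  exact ⟨ψ, funext fun i => (hψ i).symm⟩

theorem strictMono_eq_succ_comp_or_eq_cons_zero {k n : ℕ} {φ : Fin (k + 1) → Fin (n + 1)}
    (hφ : StrictMono φ) :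
    (∃ ψ : Fin (k + 1) → Fin n, φ = Fin.succ ∘ ψ) ∨
      ∃ ψ : Fin k → Fin n, φ = Fin.cons 0 (Fin.succ ∘ ψ) := by
  by_cases h0 : φ 0 = 0
  · obtain ⟨ψ, hψ⟩ := exists_eq_succ_comp (φ := Fin.tail φ)
      fun i => Fin.ne_zero_of_lt (hφ (Fin.succ_pos i))
    exact .inr ⟨ψ, by rw [← hψ, ← h0, Fin.cons_self_tail]⟩
  · exact .inl <| exists_eq_succ_comp fun i =>
      ((Fin.pos_iff_ne_zero.2 h0).trans_le (hφ.monotone (Fin.zero_le i))).ne'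

theorem setOf_isOccurrence_cons_cons (a x : A) (u v : List A) :
    {φ | IsOccurrence (a :: u) (x :: v) φ} =
      (fun φ : Fin (u.length + 1) → Fin v.length => Fin.succ ∘ φ) ''
          {φ | IsOccurrence (a :: u) v φ} ∪
        (fun φ : Fin u.length → Fin v.length =>
          (Fin.cons 0 (Fin.succ ∘ φ) : Fin (u.length + 1) → Fin (v.length + 1))) ''
          {φ | a = x ∧ IsOccurrence u v φ} := by
  ext φ
  constructor
  · intro hφ
    obtain ⟨ψ, rfl⟩ | ⟨ψ, rfl⟩ := strictMono_eq_succ_comp_or_eq_cons_zero hφ.1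
    · exact .inl ⟨ψ, isOccurrence_succ_comp_iff.1 hφ, rfl⟩
    · exact .inr ⟨ψ, isOccurrence_cons_zero_succ_comp_iff.1 hφ, rfl⟩
  · rintro (⟨ψ, hψ, rfl⟩ | ⟨ψ, hψ, rfl⟩)
    · exact isOccurrence_succ_comp_iff.2 hψ
    · exact isOccurrence_cons_zero_succ_comp_iff.2 hψ

end Occurrences

section SubwordCount

variable {A : Type*} [DecidableEq A]

theorem subwordCount_nil_right (v : List A) : subwordCount v [] = 1 := by
  simp [subwordCount]

theorem subwordCount_nil_cons (a : A) (u : List A) : subwordCount [] (a :: u) = 0 := by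
  simp [subwordCount]

theorem subwordCount_cons_cons (a x : A) (u v : List A) :
    subwordCount (x :: v) (a :: u) =
      subwordCount v (a :: u) + if a = x then subwordCount v u else 0 := by
  have succ_comp_injective :
      Function.Injective fun φ : Fin (u.length + 1) → Fin v.length => Fin.succ ∘ φ :=
    (Fin.succ_injective _).comp_left
  have cons_injective : Function.Injective fun φ : Fin u.length → Fin v.length =>
      (Fin.cons 0 (Fin.succ ∘ φ) : Fin (u.length + 1) → Fin (v.length + 1)) :=
    (Fin.cons_right_injective _).comp (Fin.succ_injective _).comp_left
  simp only [subwordCount_eq_ncard, setOf_isOccurrence_cons_cons]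
  rw [Set.ncard_union_eq, Set.ncard_image_of_injective _ succ_comp_injective,
    Set.ncard_image_of_injective _ cons_injective]
  · split_ifs with h <;> simp [h]
  · rw [Set.disjoint_left]
    rintro _ ⟨φ, -, rfl⟩ ⟨ψ, -, h⟩
    exact Fin.succ_ne_zero _ (congrFun h 0).symm

theorem subwordCount_eq_count_sublists' (v u : List A) :
    subwordCount v u = v.sublists'.count u := by
  induction v generalizing u with
  | nil => cases u <;> simp [subwordCount_nil_right, subwordCount_nil_cons]
  | cons x v ih =>
    rw [List.sublists'_cons, List.count_append, ← ih]
    cases u with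
    | nil => simp [subwordCount_nil_right, List.count_eq_zero]
    | cons a u =>
      rw [subwordCount_cons_cons]
      split_ifs with h
      · rw [h, List.count_map_of_injective _ _ List.cons_injective, ih, ih]
      · rw [List.count_eq_zero.2 (by simp [Ne.symm h])]

theorem subwordCount_pos_iff {u v : List A} : 0 < subwordCount v u ↔ u.Sublist v := by
  rw [subwordCount_eq_count_sublists', List.count_pos_iff, List.mem_sublists']

theorem subwordCount_eq_zero {u v : List A} (h : ¬u.Sublist v) : subwordCount v u = 0 :=
  Nat.eq_zero_of_not_pos (mt subwordCount_pos_iff.1 h)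

theorem subwordCount_self (v : List A) : subwordCount v v = 1 := by
  induction v with
  | nil => exact subwordCount_nil_right []
  | cons x v ih =>
    have not_sublist : ¬(x :: v).Sublist v := fun h => by simpa using h.length_le
    rw [subwordCount_cons_cons, if_pos rfl, subwordCount_eq_zero not_sublist, ih]

end SubwordCount

section SubwordKernel

variable {A R : Type*} [DecidableEq A] [CommSemiring R]

/-- The element `P_q(u,v) = q^{|v|-|u|} · binom(v,u)` of the incidence algebra of words, which
interpolates the powers of `P`. The truncated subtraction is harmless, as `binom(v,u) = 0` when
`|v| < |u|`. -/
def subwordKernel (q : R) (u v : List A) : R :=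
  q ^ (v.length - u.length) * subwordCount v u

theorem subwordKernel_eq_zero (q : R) {u v : List A} (h : ¬u.Sublist v) :
    subwordKernel q u v = 0 := by
  rw [subwordKernel, subwordCount_eq_zero h, Nat.cast_zero, mul_zero]

theorem pow_length_cons_sub_mul_subwordCount (q : R) (x : A) (u v : List A) :
    q ^ ((x :: v).length - u.length) * subwordCount v u = q * subwordKernel q u v := by
  by_cases h : u.Sublist v
  · rw [subwordKernel, List.length_cons, Nat.succ_sub h.length_le, pow_succ', mul_assoc]
  · simp [subwordKernel, subwordCount_eq_zero h]

theorem subwordKernel_nil_cons (q : R) (x : A) (v : List A) :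
    subwordKernel q [] (x :: v) = q * subwordKernel q [] v := by
  rw [← pow_length_cons_sub_mul_subwordCount, subwordKernel, subwordCount_nil_right,
    subwordCount_nil_right]

theorem subwordKernel_cons_cons (q : R) (a x : A) (u v : List A) :
    subwordKernel q (a :: u) (x :: v) =
      q * subwordKernel q (a :: u) v + if a = x then subwordKernel q u v else 0 := by
  rw [← pow_length_cons_sub_mul_subwordCount q x, subwordKernel, subwordCount_cons_cons,
    Nat.cast_add, mul_add]
  split_ifs <;> simp [subwordKernel]

theorem sum_mul_subwordKernel (f : List A → R) (q : R) (v : List A) :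
    ∑ z ∈ v.sublists.toFinset, f z * subwordKernel q z v =
      (v.sublists'.map fun z => f z * q ^ (v.length - z.length)).sum := by
  have toFinset_eq : v.sublists.toFinset = v.sublists'.toFinset := by ext; simp
  rw [Finset.sum_list_map_count, toFinset_eq]
  refine Finset.sum_congr rfl fun z _ => ?_
  rw [subwordKernel, subwordCount_eq_count_sublists', nsmul_eq_mul, ← mul_assoc, mul_comm]
  -- The two counts differ only in the `BEq` instance on words.
  congr!

theorem sum_mul_subwordKernel_cons (f : List A → R) (q : R) (x : A) (v : List A) :
    ∑ z ∈ (x :: v).sublists.toFinset, f z * subwordKernel q z (x :: v) =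
      q * ∑ z ∈ v.sublists.toFinset, f z * subwordKernel q z v +
        ∑ z ∈ v.sublists.toFinset, f (x :: z) * subwordKernel q z v := by
  simp only [sum_mul_subwordKernel, List.sublists'_cons, List.map_append, List.sum_append,
    List.map_map, ← List.sum_map_mul_left]
  congr 2
  · refine List.map_congr_left fun z hz => ?_
    rw [List.length_cons, Nat.succ_sub (List.mem_sublists'.1 hz).length_le, pow_succ']
    ring
  · simp [Function.comp_def]

theorem sum_subwordKernel_mul_subwordKernel (p q : R) (u v : List A) :
    ∑ z ∈ v.sublists.toFinset, subwordKernel p u z * subwordKernel q z v =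
      subwordKernel (p + q) u v := by
  induction v generalizing u with
  | nil => cases u <;> simp [subwordKernel, subwordCount_nil_right, subwordCount_nil_cons]
  | cons x v ih =>
    rw [sum_mul_subwordKernel_cons, ih]
    cases u with
    | nil =>
      simp only [subwordKernel_nil_cons, mul_assoc, ← Finset.mul_sum, ih]
      ring
    | cons a u =>
      simp only [subwordKernel_cons_cons, add_mul, Finset.sum_add_distrib, mul_assoc,
        ← Finset.mul_sum, ih, ite_mul, zero_mul]
      split_ifs
      · rw [ih]
        ring
      · rw [Finset.sum_const_zero]
        ring

end SubwordKernel

section IncidenceAlgebra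

variable {A : Type*} [DecidableEq A]

theorem subwordKernel_zero : (subwordKernel 0 : List A → List A → ℚ) = deltaW := by
  funext u v
  rw [deltaW]
  split_ifs with huv
  · simp [huv, subwordKernel, subwordCount_self]
  · by_cases hs : u.Sublist v
    · have length_lt : u.length < v.length :=
        lt_of_not_ge fun h => huv (hs.eq_of_length_le h)
      simp [subwordKernel, (Nat.sub_pos_of_lt length_lt).ne']
    · exact subwordKernel_eq_zero 0 hs

theorem subwordKernel_one : (subwordKernel 1 : List A → List A → ℚ) = PW := by
  funext u v
  rw [subwordKernel, one_pow, one_mul, PW]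

theorem convW_subwordKernel (p q : ℚ) :
    convW (subwordKernel p) (subwordKernel q) =
      (subwordKernel (p + q) : List A → List A → ℚ) := by
  funext u v
  rw [← sum_subwordKernel_mul_subwordKernel, convW]
  refine Finset.sum_filter_of_ne fun z _ hz => ?_
  by_contra h
  rw [subwordCount_pos_iff] at h
  exact hz (by rw [subwordKernel_eq_zero p h, zero_mul])

theorem convPowW_PW (d : ℕ) : convPowW PW d = (subwordKernel d : List A → List A → ℚ) := by
  induction d with
  | zero => rw [convPowW, Nat.cast_zero, subwordKernel_zero]
  | succ d ih =>
    rw [convPowW, ih, ← subwordKernel_one, convW_subwordKernel, Nat.cast_succ, add_comm]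

theorem convW_DW_left (q : ℚ) {F : List A → List A → ℚ} {u v : List A}
    (hF : ¬u.Sublist v → F u v = 0) : convW (DW q) F u v = q ^ u.length * F u v := by
  simp only [convW, DW, deltaW, mul_ite, mul_one, mul_zero, ite_mul, zero_mul,
    Finset.sum_ite_eq, Finset.mem_filter, List.mem_toFinset, List.mem_sublists,
    subwordCount_pos_iff, List.Sublist.refl, and_true]
  split_ifs with h
  · rfl
  · rw [hF h, mul_zero]

theorem convW_DW_right (q : ℚ) {F : List A → List A → ℚ} {u v : List A}
    (hF : ¬u.Sublist v → F u v = 0) : convW F (DW q) u v = F u v * q ^ v.length := by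
  simp only [convW, DW, deltaW, mul_ite, mul_one, mul_zero,
    Finset.sum_ite_eq', Finset.mem_filter, List.mem_toFinset, List.mem_sublists,
    subwordCount_pos_iff, List.Sublist.refl, true_and]
  split_ifs with h
  · rfl
  · rw [hF h, zero_mul]

theorem convW_DW_PW_DW {q r : ℚ} (hqr : q * r = 1) :
    convW (convW (DW q) PW) (DW r) = (subwordKernel r : List A → List A → ℚ) := by
  funext u v
  have PW_eq_zero (h : ¬u.Sublist v) : PW u v = 0 := by
    rw [PW, subwordCount_eq_zero h, Nat.cast_zero]
  have convW_left : convW (DW q) PW u v = q ^ u.length * PW u v := convW_DW_left q PW_eq_zero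
  rw [convW_DW_right r fun h => by rw [convW_left, PW_eq_zero h, mul_zero], convW_left]
  by_cases h : u.Sublist v
  · calc
      q ^ u.length * PW u v * r ^ v.length
        = (q * r) ^ u.length * (r ^ (v.length - u.length) * PW u v) := by
          rw [← Nat.add_sub_cancel' h.length_le, pow_add, Nat.add_sub_cancel_left, mul_pow]
          ring
      _ = subwordKernel r u v := by rw [hqr, one_pow, one_mul, PW, subwordKernel]
  · rw [PW_eq_zero h, subwordKernel_eq_zero r h, mul_zero, zero_mul]

theorem convPow_PW_eq_conjugate_general :
    (∀ d : ℕ, 0 < d → ∀ u v : List A,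
      convPowW PW d u v = convW (convW (DW (1 / (d : ℚ))) PW) (DW (d : ℚ)) u v) ∧
    (∀ u v : List A,
      convW PW (convW (convW (DW (-1)) PW) (DW (-1))) u v = deltaW u v) ∧
    (∀ u v : List A,
      convW (convW (convW (DW (-1)) PW) (DW (-1))) PW u v = deltaW u v) := by
  have conj_neg_one : convW (convW (DW (-1)) PW) (DW (-1)) =
      (subwordKernel (-1) : List A → List A → ℚ) := convW_DW_PW_DW (by norm_num)
  refine ⟨fun d hd u v => ?_, fun u v => ?_, fun u v => ?_⟩
  · have d_ne_zero : (d : ℚ) ≠ 0 := Nat.cast_ne_zero.2 hd.ne'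
    rw [convPowW_PW, convW_DW_PW_DW (one_div_mul_cancel d_ne_zero)]
  · rw [conj_neg_one, ← subwordKernel_one, convW_subwordKernel, add_neg_cancel,
      subwordKernel_zero]
  · rw [conj_neg_one, ← subwordKernel_one, convW_subwordKernel, neg_add_cancel,
      subwordKernel_zero]

end IncidenceAlgebra

/-- For every positive natural number `d`, `P^d = D_{1/d} · P · D_d` in `I(A*)`;
in particular the (two-sided) inverse of `P` equals `D_{−1} · P · D_{−1}`. -/
theorem convPow_PW_eq_conjugate {A : Type*} [Fintype A] [DecidableEq A] :
    (∀ d : ℕ, 0 < d → ∀ u v : List A,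
      convPowW PW d u v = convW (convW (DW (1 / (d : ℚ))) PW) (DW (d : ℚ)) u v) ∧
    (∀ u v : List A,
      convW PW (convW (convW (DW (-1)) PW) (DW (-1))) u v = deltaW u v) ∧
    (∀ u v : List A,
      convW (convW (convW (DW (-1)) PW) (DW (-1))) PW u v = deltaW u v) :=
  convPow_PW_eq_conjugate_general
end

section
/- (Generalized Pascal formula.) Let A be a finite alphabet, let u and v be words over A, let a and b be letters of A, let k = |ub| = |u| + 1, and let R ⊆ {0,1,…,k}. Then binom(va; ub, R) = [k ∉ R] · binom(v; ub, R) + [a = b] · binom(v; u, R \ {k}), where [ψ] denotes 1 if the condition ψ holds and 0 otherwise, and binom(v; u, R \ {k}) is interpreted with the restriction set (R \ {k}) ∩ {0,1,…,|u|}. -/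
/-- The extension of an occurrence `φ : [k] → [n]` (here 0-indexed, as a map
`Fin k → Fin n`) to `{0,1,…,k+1}`, in 1-based position values: `φ(0) = 0`,
`φ(i) = (φ i) + 1` (converting 0-based to 1-based) for `1 ≤ i ≤ k`, and `φ(k+1) = n+1`. -/
def extOcc {k n : ℕ} (φ : Fin k → Fin n) : ℕ → ℕ
  | 0 => 0
  | i + 1 => if h : i < k then (φ ⟨i, h⟩ : ℕ) + 1 else n + 1

/-- `vOccCount v u R` is the number of occurrences of the restricted word (pair) `(u,R)` in
`v`: strictly increasing letter-matching maps `φ` from the positions of `u` to those of `v`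
such that `φ(i+1) = φ(i) + 1` for all `i ∈ R`, with the conventions `φ(0) = 0` and
`φ(|u|+1) = |v|+1`. -/
def vOccCount {A : Type*} [DecidableEq A] (v u : List A) (R : Finset ℕ) : ℕ :=
  ((Finset.univ : Finset (Fin u.length → Fin v.length)).filter
    (fun φ => (∀ i j : Fin u.length, i < j → φ i < φ j) ∧
      (∀ i : Fin u.length, u.get i = v.get (φ i)) ∧
      ∀ i ∈ R, extOcc φ (i + 1) = extOcc φ i + 1)).card

/-! An occurrence of `ub` in `va` either avoids the final letter `a`, and then is an occurrence of
`ub` in `v`, or sends the last letter `b` to it, and then is an occurrence of `u` in `v` followed by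
one forced value. The index `k = |ub|` ties the last letter of `ub` to the end of `va`: it rules out
the first case and is automatic in the second, while every other adjacency condition reads the same
for the occurrence in `v`. -/

section

variable {A : Type*} {k n : ℕ}

/-- The map sending the new last position of the domain to the new last position of the codomain
and agreeing with `φ` elsewhere: an occurrence of `u` in `v` becomes one of `ub` in `va` that
matches `b` with `a`. -/
def extendLast (φ : Fin k → Fin n) : Fin (k + 1) → Fin (n + 1) :=
  Fin.snoc (α := fun _ => Fin (n + 1)) (Fin.castSucc ∘ φ) (Fin.last n)

@[simp]
theorem extendLast_castSucc (φ : Fin k → Fin n) (j : Fin k) :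
    extendLast φ j.castSucc = (φ j).castSucc := by
  simp [extendLast]

@[simp]
theorem extendLast_last (φ : Fin k → Fin n) : extendLast φ (Fin.last k) = Fin.last n := by
  simp [extendLast]

theorem extendLast_injective :
    Function.Injective (extendLast : (Fin k → Fin n) → Fin (k + 1) → Fin (n + 1)) := by
  intro φ ψ h
  funext j
  simpa using congrFun h j.castSucc

theorem strictMono_extendLast_iff {φ : Fin k → Fin n} :
    StrictMono (extendLast φ) ↔ StrictMono φ := by
  refine ⟨fun h i j hij => ?_, fun h i j hij => ?_⟩
  · simpa using h (Fin.castSucc_lt_castSucc_iff.2 hij)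
  · induction i using Fin.lastCases with
    | last => exact absurd hij (Fin.le_last j).not_gt
    | cast i =>
      induction j using Fin.lastCases with
      | last => simp
      | cast j => simpa using h (Fin.castSucc_lt_castSucc_iff.1 hij)

theorem mem_range_castSucc_comp_iff {φ : Fin k → Fin (n + 1)} :
    φ ∈ Set.range (fun ψ : Fin k → Fin n => Fin.castSucc ∘ ψ) ↔ ∀ j, φ j ≠ Fin.last n := by
  constructor
  · rintro ⟨ψ, rfl⟩ j
    exact Fin.castSucc_ne_last (ψ j)
  · exact fun h => ⟨fun j => (φ j).castPred (h j), by ext; simp⟩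

theorem mem_range_extendLast_of_strictMono {φ : Fin (k + 1) → Fin (n + 1)} (hφ : StrictMono φ)
    (hlast : φ (Fin.last k) = Fin.last n) : φ ∈ Set.range extendLast := by
  have hne (j : Fin k) : φ j.castSucc ≠ Fin.last n :=
    (hlast ▸ hφ (Fin.castSucc_lt_last j)).ne
  refine ⟨fun j => (φ j.castSucc).castPred (hne j), ?_⟩
  funext j
  induction j using Fin.lastCases with
  | last => simp [hlast]
  | cast j => simp

theorem mem_range_castSucc_comp_or_extendLast {φ : Fin (k + 1) → Fin (n + 1)}
    (hφ : StrictMono φ) :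
    φ ∈ Set.range (fun ψ : Fin (k + 1) → Fin n => Fin.castSucc ∘ ψ) ∨
      φ ∈ Set.range extendLast := by
  by_cases hlast : φ (Fin.last k) = Fin.last n
  · exact .inr (mem_range_extendLast_of_strictMono hφ hlast)
  · refine .inl (mem_range_castSucc_comp_iff.2 fun j hj => hlast ?_)
    exact Fin.last_le_iff.1 (hj ▸ hφ.monotone (Fin.le_last j))

theorem disjoint_range_castSucc_comp_range_extendLast :
    Disjoint (Set.range fun ψ : Fin (k + 1) → Fin n => Fin.castSucc ∘ ψ)
      (Set.range (extendLast : (Fin k → Fin n) → _)) := by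
  rw [Set.disjoint_right]
  rintro _ ⟨φ, rfl⟩ h
  exact mem_range_castSucc_comp_iff.1 h (Fin.last k) (extendLast_last φ)

theorem ncard_eq_ncard_preimage_castSucc_comp_add_extendLast
    {S : Set (Fin (k + 1) → Fin (n + 1))} (hS : ∀ φ ∈ S, StrictMono φ) :
    S.ncard = ((fun ψ : Fin (k + 1) → Fin n => Fin.castSucc ∘ ψ) ⁻¹' S).ncard +
      (extendLast ⁻¹' S).ncard := by
  set raise : (Fin (k + 1) → Fin n) → Fin (k + 1) → Fin (n + 1) := fun ψ => Fin.castSucc ∘ ψ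
  have raise_injective : Function.Injective raise := (Fin.castSucc_injective n).comp_left
  have hdisj : Disjoint (S ∩ Set.range raise) (S ∩ Set.range extendLast) :=
    disjoint_range_castSucc_comp_range_extendLast.mono Set.inter_subset_right
      Set.inter_subset_right
  have hcover : S ∩ Set.range raise ∪ S ∩ Set.range extendLast = S := by
    rw [← Set.inter_union_distrib_left, Set.inter_eq_left]
    exact fun φ hφ => mem_range_castSucc_comp_or_extendLast (hS φ hφ)
  calc
    S.ncard = (S ∩ Set.range raise).ncard + (S ∩ Set.range extendLast).ncard := by
      rw [← Set.ncard_union_eq hdisj, hcover]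
    _ = (raise ⁻¹' S).ncard + (extendLast ⁻¹' S).ncard := by
      rw [← Set.image_preimage_eq_inter_range, ← Set.image_preimage_eq_inter_range,
        Set.ncard_image_of_injective _ raise_injective,
        Set.ncard_image_of_injective _ extendLast_injective]

theorem extOcc_of_lt (φ : Fin k → Fin n) {i : ℕ} (hi : k < i) : extOcc φ i = n + 1 := by
  obtain ⟨i, rfl⟩ := Nat.exists_eq_add_one_of_ne_zero (Nat.ne_zero_of_lt hi)
  simp [extOcc, Nat.not_lt.2 (Nat.le_of_lt_succ hi)]

theorem extOcc_le (φ : Fin k → Fin n) {i : ℕ} (hi : i ≤ k) : extOcc φ i ≤ n := by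
  cases i with
  | zero => exact Nat.zero_le n
  | succ i => simp [extOcc, Nat.lt_of_succ_le hi]

theorem extOcc_castSucc_comp (φ : Fin k → Fin n) {i : ℕ} (hi : i ≤ k) :
    extOcc (Fin.castSucc ∘ φ) i = extOcc φ i := by
  cases i with
  | zero => rfl
  | succ i => simp [extOcc, Nat.lt_of_succ_le hi]

theorem extOcc_extendLast (φ : Fin k → Fin n) {i : ℕ} (hi : i ≤ k + 1) :
    extOcc (extendLast φ) i = extOcc φ i := by
  cases i with
  | zero => rfl
  | succ i =>
    obtain hlt | rfl := (Nat.le_of_succ_le_succ hi).lt_or_eq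
    · simpa [extOcc, hlt, Nat.lt_succ_of_lt hlt] using
        congrArg Fin.val (extendLast_castSucc φ ⟨i, hlt⟩)
    · have hval : (extendLast φ ⟨i, i.lt_succ_self⟩ : ℕ) = n := congrArg Fin.val (extendLast_last φ)
      simp [extOcc, hval]

theorem extOcc_castSucc_comp_adjacent_iff (φ : Fin k → Fin n) (i : ℕ) :
    extOcc (Fin.castSucc ∘ φ) (i + 1) = extOcc (Fin.castSucc ∘ φ) i + 1 ↔
      i ≠ k ∧ extOcc φ (i + 1) = extOcc φ i + 1 := by
  obtain hlt | rfl | hgt := lt_trichotomy i k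
  · rw [extOcc_castSucc_comp φ hlt, extOcc_castSucc_comp φ hlt.le]
    simp [hlt.ne]
  · have := extOcc_le φ le_rfl
    rw [extOcc_of_lt _ (Nat.lt_succ_self i), extOcc_castSucc_comp φ le_rfl]
    lia
  · simp [extOcc_of_lt _ hgt, extOcc_of_lt _ (Nat.lt_succ_of_lt hgt)]

theorem extOcc_extendLast_adjacent_iff (φ : Fin k → Fin n) (i : ℕ) :
    extOcc (extendLast φ) (i + 1) = extOcc (extendLast φ) i + 1 ↔
      i = k + 1 ∨ extOcc φ (i + 1) = extOcc φ i + 1 := by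
  obtain hlt | rfl | hgt := lt_trichotomy i (k + 1)
  · rw [extOcc_extendLast φ hlt, extOcc_extendLast φ hlt.le]
    simp [hlt.ne]
  · rw [extOcc_of_lt _ (Nat.lt_succ_self _), extOcc_extendLast φ le_rfl,
      extOcc_of_lt φ (Nat.lt_succ_self k)]
    simp
  · have hk : k < i := Nat.lt_of_succ_lt hgt
    simp [extOcc_of_lt _ hgt, extOcc_of_lt _ (Nat.lt_succ_of_lt hgt), extOcc_of_lt φ hk,
      extOcc_of_lt φ (Nat.lt_succ_of_lt hk), hgt.ne']

/-- The occurrences of the restricted word `(U, R)` in `V`. Words are functions on `Fin k` and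
`Fin n` rather than lists, so that removing a last letter is `Fin.init`. -/
def occurrences (U : Fin k → A) (V : Fin n → A) (R : Finset ℕ) : Set (Fin k → Fin n) :=
  {φ | StrictMono φ ∧ (∀ i, U i = V (φ i)) ∧ ∀ i ∈ R, extOcc φ (i + 1) = extOcc φ i + 1}

theorem castSucc_comp_mem_occurrences_iff {U : Fin k → A} {V : Fin (n + 1) → A} {R : Finset ℕ}
    {φ : Fin k → Fin n} :
    Fin.castSucc ∘ φ ∈ occurrences U V R ↔ k ∉ R ∧ φ ∈ occurrences U (Fin.init V) R := by
  have hmono : StrictMono (Fin.castSucc ∘ φ) ↔ StrictMono φ := Iff.rfl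
  have hadj : (∀ i ∈ R, i ≠ k ∧ extOcc φ (i + 1) = extOcc φ i + 1) ↔
      k ∉ R ∧ ∀ i ∈ R, extOcc φ (i + 1) = extOcc φ i + 1 := by
    grind
  simp only [occurrences, Set.mem_ofPred_eq, hmono, extOcc_castSucc_comp_adjacent_iff, hadj,
    Fin.init, Function.comp_apply]
  tauto

theorem extendLast_mem_occurrences_iff {U : Fin (k + 1) → A} {V : Fin (n + 1) → A}
    {R : Finset ℕ} {φ : Fin k → Fin n} :
    extendLast φ ∈ occurrences U V R ↔ V (Fin.last n) = U (Fin.last k) ∧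
      φ ∈ occurrences (Fin.init U) (Fin.init V) (R \ {k + 1}) := by
  have hadj : (∀ i ∈ R, i = k + 1 ∨ extOcc φ (i + 1) = extOcc φ i + 1) ↔
      ∀ i ∈ R \ {k + 1}, extOcc φ (i + 1) = extOcc φ i + 1 := by
    grind
  simp only [occurrences, Set.mem_ofPred_eq, strictMono_extendLast_iff,
    extOcc_extendLast_adjacent_iff, hadj, Fin.forall_fin_succ', extendLast_castSucc,
    extendLast_last, Fin.init, eq_comm (a := V (Fin.last n))]
  tauto

theorem ncard_occurrences_pascal [DecidableEq A] (U : Fin (k + 1) → A) (V : Fin (n + 1) → A)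
    (R : Finset ℕ) :
    (occurrences U V R).ncard =
      (if k + 1 ∉ R then 1 else 0) * (occurrences U (Fin.init V) R).ncard +
      (if V (Fin.last n) = U (Fin.last k) then 1 else 0) *
        (occurrences (Fin.init U) (Fin.init V) (R \ {k + 1})).ncard := by
  rw [ncard_eq_ncard_preimage_castSucc_comp_add_extendLast fun φ hφ => hφ.1]
  simp only [Set.preimage, castSucc_comp_mem_occurrences_iff, extendLast_mem_occurrences_iff]
  congr 1 <;> split_ifs with h <;> simp [h]

theorem vOccCount_eq_ncard_occurrences [DecidableEq A] {u v : List A} (R : Finset ℕ)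
    (hu : u.length = k) (hv : v.length = n) :
    vOccCount v u R =
      (occurrences (u.get ∘ Fin.cast hu.symm) (v.get ∘ Fin.cast hv.symm) R).ncard := by
  subst hu hv
  rw [vOccCount, ← Set.ncard_coe_finset]
  congr 1
  ext φ
  simp [occurrences, StrictMono]

theorem init_get_append_singleton (u : List A) (b : A)
    (h : u.length + 1 = (u ++ [b]).length) :
    Fin.init ((u ++ [b]).get ∘ Fin.cast h) = u.get := by
  funext i
  simp [Fin.init]

end

theorem vOccCount_pascal_general {A : Type*} [DecidableEq A] (u v : List A) (a b : A)
    (R : Finset ℕ) (hR : R ⊆ Finset.range ((u ++ [b]).length + 1)) :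
    vOccCount (v ++ [a]) (u ++ [b]) R =
      (if (u ++ [b]).length ∉ R then 1 else 0) * vOccCount v (u ++ [b]) R +
      (if a = b then 1 else 0) *
        vOccCount v u ((R \ {(u ++ [b]).length}) ∩ Finset.range (u.length + 1)) := by
  have hu : (u ++ [b]).length = u.length + 1 := List.length_append
  have hv : (v ++ [a]).length = v.length + 1 := List.length_append
  have hrange : (R \ {(u ++ [b]).length}) ∩ Finset.range (u.length + 1) =
      R \ {u.length + 1} := by
    grind
  rw [hrange, hu, vOccCount_eq_ncard_occurrences R hu hv, vOccCount_eq_ncard_occurrences R hu rfl,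
    vOccCount_eq_ncard_occurrences _ rfl rfl, ncard_occurrences_pascal,
    init_get_append_singleton, init_get_append_singleton]
  simp

/-- Generalized Pascal formula: for words `u,v`, letters `a,b`, `k = |ub|` and
`R ⊆ {0,1,…,k}`,
`binom(va; ub, R) = [k ∉ R]·binom(v; ub, R) + [a = b]·binom(v; u, (R \ {k}) ∩ {0,…,|u|})`. -/
theorem vOccCount_pascal {A : Type*} [Fintype A] [DecidableEq A] (u v : List A) (a b : A)
    (R : Finset ℕ) (hR : R ⊆ Finset.range ((u ++ [b]).length + 1)) :
    vOccCount (v ++ [a]) (u ++ [b]) R =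
      (if (u ++ [b]).length ∉ R then 1 else 0) * vOccCount v (u ++ [b]) R +
      (if a = b then 1 else 0) *
        vOccCount v u ((R \ {(u ++ [b]).length}) ∩ Finset.range (u.length + 1)) :=
  vOccCount_pascal_general u v a b R hR
end
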